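/- Let k ≥ 1 and let r₁ ≤ r₂ ≤ … ≤ r_k be integers with r₁ ≥ 1, and set n = k + r_k. Then there exists a unique fixed-point-free shuffle σ of {1,…,n} with parameter k such that σ(i) = i + r_i for all i with 1 ≤ i ≤ k (i.e. with Lorenz vector ⟨r₁,…,r_k⟩). -/

import Mathlib

/-- `σ` is a shuffle of `{1,…,n}` with parameter `k` (encoded 0-based on `Fin n`). -/
def IsShuffle {n : ℕ} (k : ℕ) (σ : Equiv.Perm (Fin n)) : Prop :=
  1 ≤ k ∧ k < n ∧
    (∀ i j : Fin n, i < j → (j : ℕ) < k → σ i < σ j) ∧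
    (∀ i j : Fin n, i < j → k ≤ (i : ℕ) → σ i < σ j)

/-- `σ` has no fixed points. -/
def FixedPointFree {n : ℕ} (σ : Equiv.Perm (Fin n)) : Prop :=
  ∀ i, σ i ≠ i

/-!
A shuffle with parameter `k` is determined by its values on the first `k` positions: the remaining
values must fill the remaining positions in increasing order. Conversely, any increasing choice of
the first `k` values extends to a shuffle `σ` in this way, and `i ↦ i + r i` is such a choice.

The entries on the first block move up since `r` is positive. As `n = k + r (k - 1)`, the maximal
value is taken on the first block, so the `n - i` positions from `i ≥ k` on have their values
between `σ i` and the maximal value, which they miss. Hence `σ i < i`, and no position is fixed.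
-/

open Finset

section Shuffle

variable {n k m : ℕ}

/-- The permutation of `Fin (k + m)` listing first the elements of `s` in increasing order and then
those of `sᶜ` in increasing order, in one-line notation. Every shuffle with parameter `k` arises
from a unique `k`-element set `s` in this way. -/
def shuffleOfFinset (s : Finset (Fin (k + m))) (hs : #s = k) : Equiv.Perm (Fin (k + m)) :=
  finSumFinEquiv.symm.trans (finSumEquivOfFinset hs (by simp [card_compl, hs]))

theorem shuffleOfFinset_castAdd (s : Finset (Fin (k + m))) (hs : #s = k) (i : Fin k) :
    shuffleOfFinset s hs (Fin.castAdd m i) = s.orderEmbOfFin hs i := by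
  simp [shuffleOfFinset]

theorem strictMono_shuffleOfFinset_natAdd (s : Finset (Fin (k + m))) (hs : #s = k) :
    StrictMono fun j : Fin m ↦ shuffleOfFinset s hs (Fin.natAdd k j) := by
  simpa [shuffleOfFinset] using OrderEmbedding.strictMono _

theorem isShuffle_iff_strictMono {σ : Equiv.Perm (Fin (k + m))} :
    IsShuffle k σ ↔ 1 ≤ k ∧ 1 ≤ m ∧
      StrictMono (fun i : Fin k ↦ σ (Fin.castAdd m i)) ∧
      StrictMono (fun j : Fin m ↦ σ (Fin.natAdd k j)) := by
  refine and_congr_right fun _ ↦ and_congr (by omega) (and_congr ⟨?_, ?_⟩ ⟨?_, ?_⟩)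
  · exact fun h i j hij ↦ h _ _ hij j.isLt
  · exact fun h i j hij hj ↦ h (a := ⟨i, (Fin.lt_def.1 hij).trans hj⟩) (b := ⟨j, hj⟩) hij
  · exact fun h i j hij ↦ h _ _ (by simpa using hij) (by simp)
  · intro h i j hij hi
    obtain ⟨i, rfl⟩ := (Fin.range_natAdd k m).ge hi
    obtain ⟨j, rfl⟩ := (Fin.range_natAdd k m).ge (hi.trans hij.le)
    exact h (by simpa using hij)

theorem isShuffle_shuffleOfFinset (hk : 1 ≤ k) (hm : 1 ≤ m) (s : Finset (Fin (k + m)))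
    (hs : #s = k) : IsShuffle k (shuffleOfFinset s hs) := by
  refine isShuffle_iff_strictMono.2 ⟨hk, hm, ?_, strictMono_shuffleOfFinset_natAdd s hs⟩
  simpa only [shuffleOfFinset_castAdd] using (s.orderEmbOfFin hs).strictMono

theorem exists_isShuffle_castLE_eq (hk : 1 ≤ k) (hkn : k < n) {f : Fin k → Fin n}
    (hf : StrictMono f) :
    ∃ σ : Equiv.Perm (Fin n), IsShuffle k σ ∧ ∀ i, σ (Fin.castLE hkn.le i) = f i := by
  obtain ⟨m, rfl⟩ := Nat.exists_eq_add_of_le hkn.le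
  have hcard : #(univ.image f) = k := by simp [card_image_of_injective _ hf.injective]
  have hf_eq : f = (univ.image f).orderEmbOfFin hcard := orderEmbOfFin_unique hcard (by simp) hf
  refine ⟨shuffleOfFinset _ hcard, isShuffle_shuffleOfFinset hk (by omega) _ _, fun i ↦ ?_⟩
  exact (shuffleOfFinset_castAdd _ hcard i).trans (congrFun hf_eq i).symm

theorem apply_lt_of_monotoneOn_Ici {f : Fin n → Fin n} (hf : f.Injective) {a i : Fin n}
    (hmono : MonotoneOn f (Set.Ici i)) (hai : a < i) (hmax : ∀ j, f j ≤ f a) : f i < i := by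
  have hmaps : Set.MapsTo f (Ici i) (Ico (f i) (f a)) := by
    intro j hj
    have hij : i ≤ j := mem_Ici.1 hj
    have hne : f j ≠ f a := hf.ne (hai.trans_le hij).ne'
    exact mem_Ico.2 ⟨hmono Set.self_mem_Ici hij hij, (hmax j).lt_of_ne hne⟩
  have hcard : n - i ≤ f a - f i := by
    simpa only [Fin.card_Ici, Fin.card_Ico] using card_le_card_of_injOn f hmaps hf.injOn
  omega

namespace IsShuffle

theorem ext {σ τ : Equiv.Perm (Fin n)} (hσ : IsShuffle k σ) (hτ : IsShuffle k τ)
    (h : ∀ i : Fin n, (i : ℕ) < k → σ i = τ i) : σ = τ := by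
  obtain ⟨m, rfl⟩ := Nat.exists_eq_add_of_le hσ.2.1.le
  have himage : σ '' {i | k ≤ (i : ℕ)} = τ '' {i | k ≤ (i : ℕ)} := by
    rw [← compl_inj_iff, ← Set.image_compl_eq σ.bijective, ← Set.image_compl_eq τ.bijective]
    exact Set.image_congr fun i hi ↦ h i (not_le.1 hi)
  have hblock : (fun j : Fin m ↦ σ (Fin.natAdd k j)) = fun j ↦ τ (Fin.natAdd k j) := by
    rw [← (isShuffle_iff_strictMono.1 hσ).2.2.2.range_inj (isShuffle_iff_strictMono.1 hτ).2.2.2,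
      Set.range_comp' σ, Set.range_comp' τ, Fin.range_natAdd, himage]
  exact Equiv.ext ((Fin.forall_fin_add _).2 ⟨fun i ↦ h _ (by simp), congrFun hblock⟩)

theorem fixedPointFree {σ : Equiv.Perm (Fin n)} (hσ : IsShuffle k σ)
    (hlt : ∀ i : Fin n, (i : ℕ) < k → i < σ i) {a : Fin n} (ha : (a : ℕ) < k)
    (hmax : ∀ j, σ j ≤ σ a) : FixedPointFree σ := by
  intro i
  obtain hi | hi := lt_or_ge (i : ℕ) k
  · exact (hlt i hi).ne'
  · have hmono : StrictMonoOn σ (Set.Ici i) := fun j hj l _ hjl ↦ hσ.2.2.2 j l hjl (hi.trans hj)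
    exact (apply_lt_of_monotoneOn_Ici σ.injective hmono.monotoneOn (ha.trans_le hi) hmax).ne

end IsShuffle

end Shuffle

/-- Every nondecreasing sequence `r₁ ≤ … ≤ r_k` of positive integers is the Lorenz
vector of a unique fixed-point-free shuffle of `{1,…,n}` with parameter `k`, where
`n = k + r_k`. -/
theorem exists_unique_shuffle_of_lorenzVector {k : ℕ} (hk : 1 ≤ k)
    (r : Fin k → ℕ) (hmono : Monotone r) (hpos : 1 ≤ r ⟨0, hk⟩)
    {n : ℕ} (hn : n = k + r ⟨k - 1, by omega⟩) :
    ∃! σ : Equiv.Perm (Fin n),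
      IsShuffle k σ ∧ FixedPointFree σ ∧
        ∀ (i : Fin n) (h : (i : ℕ) < k), (σ i : ℕ) = (i : ℕ) + r ⟨i, h⟩ := by
  have hr_pos (i : Fin k) : 1 ≤ r i := hpos.trans (hmono (Nat.zero_le i))
  have hr_le (i : Fin k) : r i ≤ r ⟨k - 1, by omega⟩ := hmono (Nat.le_sub_one_of_lt i.2)
  have hkn : k < n := by grind
  let f (i : Fin k) : Fin n := ⟨i + r i, by grind⟩
  have hf : StrictMono f := fun i j hij ↦
    show (i : ℕ) + r i < j + r j from add_lt_add_of_lt_of_le hij (hmono hij.le)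
  obtain ⟨σ, hσ, hσf⟩ := exists_isShuffle_castLE_eq hk hkn hf
  have hval (i : Fin n) (h : (i : ℕ) < k) : (σ i : ℕ) = i + r ⟨i, h⟩ :=
    congrArg Fin.val (hσf ⟨i, h⟩)
  refine ⟨σ, ⟨hσ, ?_, hval⟩, fun τ ⟨hτ, _, hτval⟩ ↦ hτ.ext hσ fun i h ↦ ?_⟩
  · let last : Fin n := ⟨k - 1, by omega⟩
    have hlast : (last : ℕ) < k := Nat.sub_one_lt_of_lt hk
    have hlt (i : Fin n) (h : (i : ℕ) < k) : i < σ i := by grind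
    have hmax (j : Fin n) : σ j ≤ σ last := by grind
    exact hσ.fixedPointFree hlt hlast hmax
  · exact Fin.ext ((hτval i h).trans (hval i h).symm)
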